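/- Fix d ≥ 1 and identify M(ℂ^{d²}) with M(ℂ^d) ⊗ M(ℂ^d), with partial trace over the first factor Tr₁(X)_{j,j'} = ∑_i X_{(i,j),(i,j')}. For any X ∈ M(ℂ^{d²}) define X♯ = X + (1/d) 𝟙_d ⊗ ( (1/d)𝟙_d − Tr₁(X) ). Then Tr₁(X♯) = (1/d)𝟙_d, and for every X' ∈ M(ℂ^{d²}) with Tr₁(X') = (1/d)𝟙_d one has ‖X − X♯‖₂ ≤ ‖X − X'‖₂, with equality if and only if X' = X♯; i.e., X♯ is the unique Frobenius-norm projection of X onto the trace-preserving hyperplane 𝒯𝒫 = { X' : Tr₁(X') = (1/d)𝟙_d }. -/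

import Mathlib

noncomputable section
open Matrix Kronecker BigOperators
open scoped ComplexOrder

/-- The Frobenius (Hilbert–Schmidt) norm `‖A‖₂ = √Tr(AᴴA)` of a complex matrix. -/
def frobNorm {n : Type*} [Fintype n] (A : Matrix n n ℂ) : ℝ :=
  Real.sqrt (Matrix.trace (Aᴴ * A)).re

/-- The operator norm `‖A‖_∞` (largest singular value) of a complex matrix. -/
def opNorm {n : Type*} [Fintype n] [DecidableEq n] (A : Matrix n n ℂ) : ℝ :=
  ‖Matrix.toEuclideanCLM (𝕜 := ℂ) A‖

/-- The trace norm `‖A‖₁ = Tr √(AᴴA)` of a complex matrix. -/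
def traceNorm {n : Type*} [Fintype n] [DecidableEq n] (A : Matrix n n ℂ) : ℝ :=
  (open scoped MatrixOrder in CFC.sqrt (Aᴴ * A)).trace.re

/-- A density matrix: positive semidefinite with trace one. -/
def IsDensity {n : Type*} [Fintype n] (ρ : Matrix n n ℂ) : Prop :=
  ρ.PosSemidef ∧ ρ.trace = 1

/-- A density matrix `ρ` is `δ`-almost rank `r` if there is a density matrix of rank at most `r`
within operator-norm distance `δ` of it. -/
def AlmostRank {n : Type*} [Fintype n] [DecidableEq n] (r : ℕ) (δ : ℝ) (ρ : Matrix n n ℂ) : Prop :=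
  ∃ σ : Matrix n n ℂ, IsDensity σ ∧ σ.rank ≤ r ∧ opNorm (ρ - σ) ≤ δ

/-- The rank-one (outer-product) matrix `|v⟩⟨v|`. -/
def outer {n : Type*} (v : EuclideanSpace ℂ n) : Matrix n n ℂ :=
  Matrix.of fun i j => v i * (starRingEnd ℂ) (v j)

/-- Partial trace over the first tensor factor. -/
def ptrace1 {d : ℕ} (X : Matrix (Fin d × Fin d) (Fin d × Fin d) ℂ) : Matrix (Fin d) (Fin d) ℂ :=
  Matrix.of fun j j' => ∑ i, X (i, j) (i, j')

/-- Partial trace over the second tensor factor. -/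
def ptrace2 {d : ℕ} (X : Matrix (Fin d × Fin d) (Fin d × Fin d) ℂ) : Matrix (Fin d) (Fin d) ℂ :=
  Matrix.of fun i i' => ∑ j, X (i, j) (i', j)

/-- A family of `m` rank-one projectors, each given by a unit vector. -/
def IsRankOneProjFamily {d m : ℕ} (P : Fin m → Matrix (Fin d) (Fin d) ℂ) : Prop :=
  ∀ l, ∃ v : EuclideanSpace ℂ (Fin d), ‖v‖ = 1 ∧ P l = outer v

/-- Near-isotropy: `∑ l, Tr(P l · A) • P l = A + Tr(A) • 𝟙` for every `A`. -/
def NearIsotropic {d m : ℕ} (P : Fin m → Matrix (Fin d) (Fin d) ℂ) : Prop :=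
  ∀ A : Matrix (Fin d) (Fin d) ℂ,
    ∑ l, Matrix.trace (P l * A) • P l = A + Matrix.trace A • (1 : Matrix (Fin d) (Fin d) ℂ)

/-- The affine projection `X ↦ X♯ = X + (1/d) 𝟙_d ⊗ ((1/d)𝟙_d − Tr₁(X))` onto the
trace-preserving hyperplane. -/
def tpProj (d : ℕ) (X : Matrix (Fin d × Fin d) (Fin d × Fin d) ℂ) :
    Matrix (Fin d × Fin d) (Fin d × Fin d) ℂ :=
  X + (1 / (d : ℂ)) • ((1 : Matrix (Fin d) (Fin d) ℂ) ⊗ₖ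
    ((1 / (d : ℂ)) • (1 : Matrix (Fin d) (Fin d) ℂ) - ptrace1 X))

theorem ptrace1_add' {d : ℕ} (X Y : Matrix (Fin d × Fin d) (Fin d × Fin d) ℂ) :
    ptrace1 (X + Y) = ptrace1 X + ptrace1 Y := by
  ext j j'
  simp [ptrace1, Finset.sum_add_distrib]

theorem ptrace1_sub' {d : ℕ} (X Y : Matrix (Fin d × Fin d) (Fin d × Fin d) ℂ) :
    ptrace1 (X - Y) = ptrace1 X - ptrace1 Y := by
  ext j j'
  simp [ptrace1, Finset.sum_sub_distrib]

theorem ptrace1_smul_kron {d : ℕ} (hd : 1 ≤ d) (B : Matrix (Fin d) (Fin d) ℂ) :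
    ptrace1 ((1 / (d : ℂ)) • ((1 : Matrix (Fin d) (Fin d) ℂ) ⊗ₖ B)) = B := by
  have hd' : (d : ℂ) ≠ 0 := by
    exact_mod_cast (by omega : d ≠ 0)
  ext j j'
  simp [ptrace1, Matrix.kroneckerMap_apply]
  field_simp

theorem trace_one_kron_mul {d : ℕ} (B : Matrix (Fin d) (Fin d) ℂ)
    (Y : Matrix (Fin d × Fin d) (Fin d × Fin d) ℂ) :
    Matrix.trace (((1 : Matrix (Fin d) (Fin d) ℂ) ⊗ₖ B) * Y) = Matrix.trace (B * ptrace1 Y) := by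
  simp only [Matrix.trace, Matrix.diag, Matrix.mul_apply, ptrace1, Matrix.kroneckerMap_apply,
    Fintype.sum_prod_type, Matrix.one_apply, Matrix.of_apply, ite_mul, one_mul, zero_mul,
    Finset.mul_sum]
  rw [Finset.sum_comm]
  refine Finset.sum_congr rfl fun j _ => ?_
  conv_rhs => rw [Finset.sum_comm]
  refine Finset.sum_congr rfl fun i _ => ?_
  rw [Finset.sum_comm]
  refine Finset.sum_congr rfl fun k _ => ?_
  simp

theorem trace_self_re_nonneg {n : Type*} [Fintype n] (A : Matrix n n ℂ) :
    0 ≤ (Matrix.trace (Aᴴ * A)).re := by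
  have h := (Matrix.posSemidef_conjTranspose_mul_self A).trace_nonneg
  exact (Complex.le_def.1 h).1

theorem trace_self_re_eq_zero {n : Type*} [Fintype n] (A : Matrix n n ℂ)
    (h0 : (Matrix.trace (Aᴴ * A)).re = 0) : A = 0 := by
  have h := (Matrix.posSemidef_conjTranspose_mul_self A).trace_nonneg
  apply Matrix.trace_conjTranspose_mul_self_eq_zero_iff.1
  exact Complex.ext h0 (Complex.le_def.1 h).2.symm

theorem trace_pyth {n : Type*} [Fintype n] (D E : Matrix n n ℂ)
    (h : Matrix.trace (Dᴴ * E) = 0) :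
    (Matrix.trace ((D + E)ᴴ * (D + E))).re =
      (Matrix.trace (Dᴴ * D)).re + (Matrix.trace (Eᴴ * E)).re := by
  have h2 : Matrix.trace (Eᴴ * D) = 0 := by
    have := Matrix.trace_conjTranspose (Dᴴ * E)
    simpa [h] using this
  simp [Matrix.add_mul, Matrix.mul_add, h, h2]

/-- Proposition 3: `X♯` lies on the trace-preserving hyperplane
`𝒯𝒫 = {X' : Tr₁(X') = (1/d)𝟙_d}` and is the unique Frobenius-norm projection of `X` onto it. -/
theorem tpProj_is_unique_projection (d : ℕ) (hd : 1 ≤ d)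
    (X : Matrix (Fin d × Fin d) (Fin d × Fin d) ℂ) :
    ptrace1 (tpProj d X) = (1 / (d : ℂ)) • (1 : Matrix (Fin d) (Fin d) ℂ) ∧
    ∀ X' : Matrix (Fin d × Fin d) (Fin d × Fin d) ℂ,
      ptrace1 X' = (1 / (d : ℂ)) • (1 : Matrix (Fin d) (Fin d) ℂ) →
      frobNorm (X - tpProj d X) ≤ frobNorm (X - X') ∧
      (frobNorm (X - tpProj d X) = frobNorm (X - X') ↔ X' = tpProj d X) := by
  have hP : ptrace1 (tpProj d X) = (1 / (d : ℂ)) • (1 : Matrix (Fin d) (Fin d) ℂ) := by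
    rw [tpProj, ptrace1_add', ptrace1_smul_kron hd]
    abel
  refine ⟨hP, fun X' hX' => ?_⟩
  have hE : ptrace1 (tpProj d X - X') = 0 := by rw [ptrace1_sub', hP, hX', sub_self]
  have horth : Matrix.trace ((X - tpProj d X)ᴴ * (tpProj d X - X')) = 0 := by
    have hD : X - tpProj d X = -((1 / (d : ℂ)) • ((1 : Matrix (Fin d) (Fin d) ℂ) ⊗ₖ
        ((1 / (d : ℂ)) • (1 : Matrix (Fin d) (Fin d) ℂ) - ptrace1 X))) := by
      rw [tpProj]
      abel
    rw [hD, Matrix.conjTranspose_neg, Matrix.conjTranspose_smul, Matrix.conjTranspose_kronecker,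
      Matrix.conjTranspose_one, Matrix.neg_mul, Matrix.smul_mul, Matrix.trace_neg,
      Matrix.trace_smul, trace_one_kron_mul, hE]
    simp
  have hpy := trace_pyth _ _ horth
  rw [sub_add_sub_cancel] at hpy
  have hn := trace_self_re_nonneg (tpProj d X - X')
  have hn0 := trace_self_re_nonneg (X - tpProj d X)
  have hn1 := trace_self_re_nonneg (X - X')
  refine ⟨Real.sqrt_le_sqrt (by linarith), fun h => ?_, fun h => by rw [h]⟩
  have h' := (Real.sqrt_inj hn0 hn1).1 h
  exact (sub_eq_zero.1 (trace_self_re_eq_zero _ (by linarith))).symm
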